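/- For every pair of nonnegative integers (α, β) with α + β = 20, there exists a partition of the edge set of K_42 minus a perfect matching into α C_3-factors and β C_7-factors. That is, HWP(42; 3, 7) = {(α, β) : α + β = 20}. -/

import Mathlib

open SimpleGraph

/-- A `C_k`-factor: a spanning 2-regular subgraph all of whose connected
components (necessarily cycles) have exactly `k` vertices. -/
def IsCycleFactor {V : Type*} (H : SimpleGraph V) (k : ℕ) : Prop :=
  (∀ v : V, (H.neighborSet v).ncard = 2) ∧
  (∀ v : V, (H.connectedComponentMk v).supp.ncard = k)

/-- A 1-factor (perfect matching): every vertex has exactly one neighbour. -/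
def IsOneFactor {V : Type*} (H : SimpleGraph V) : Prop :=
  ∀ v : V, (H.neighborSet v).ncard = 1

/-- `F 0, …, F (N-1)` partitions the edge set of `G`. -/
def IsDecompOn {V : Type*} (G : SimpleGraph V) (F : ℕ → SimpleGraph V) (N : ℕ) : Prop :=
  (∀ i < N, F i ≤ G) ∧
  (∀ i < N, ∀ j < N, i ≠ j → Disjoint (F i).edgeSet (F j).edgeSet) ∧
  G.edgeSet = ⋃ i ∈ Set.Iio N, (F i).edgeSet

/-- A Hamilton–Waterloo decomposition of a graph `G` into `α` `C_m`-factors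
and `β` `C_n`-factors. -/
def IsHWGraph {V : Type*} (G : SimpleGraph V) (m n α β : ℕ) : Prop :=
  ∃ F : ℕ → SimpleGraph V, IsDecompOn G F (α + β) ∧
    (∀ i < α, IsCycleFactor (F i) m) ∧
    (∀ i, α ≤ i → i < α + β → IsCycleFactor (F i) n)

/-- `HW v m n α β`: a partition of `E(K_v)` (for `v` odd) or of `E(K_v)` minus a
perfect matching (for `v` even) into `α` `C_m`-factors and `β` `C_n`-factors. -/
def HW (v m n α β : ℕ) : Prop :=
  ∃ I : SimpleGraph (Fin v),
    (Odd v → I = ⊥) ∧ (Even v → IsOneFactor I) ∧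
    IsHWGraph ((⊤ : SimpleGraph (Fin v)) \ I) m n α β

/-- The complete `u`-partite graph with parts of size `g`. -/
def Kpartite (u g : ℕ) : SimpleGraph (Fin u × Fin g) :=
  SimpleGraph.fromRel (fun a b => a.1 ≠ b.1)

/-- The Cayley graph on an additive group with connection set `S`. -/
def cayley (Γ : Type*) [AddGroup Γ] (S : Set Γ) : SimpleGraph Γ :=
  SimpleGraph.fromRel (fun a b => a - b ∈ S)

/-! ### Degree count: the number of factors is forced -/

theorem hw_count (α β : ℕ) (h : HW 42 3 7 α β) : α + β = 20 := by
  classical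
  obtain ⟨I, -, hI, F, ⟨hle, hdis, hun⟩, h3, h7⟩ := h
  have hI := hI (by decide)
  have h2 : ∀ i < α + β, ((F i).neighborSet 0).ncard = 2 := by
    intro i hi
    by_cases h : i < α
    · exact (h3 i h).1 0
    · exact (h7 i (by omega) hi).1 0
  have e1 : ((⊤ : SimpleGraph (Fin 42)) \ I).neighborSet 0
      = ⋃ i ∈ Finset.range (α + β), (F i).neighborSet 0 := by
    ext w
    have := Set.ext_iff.1 hun s(0, w)
    simpa only [SimpleGraph.mem_edgeSet, Set.mem_iUnion, Set.mem_Iio, Finset.mem_range,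
      SimpleGraph.mem_neighborSet] using this
  have e2 : (Finset.univ.filter (fun w => ((⊤ : SimpleGraph (Fin 42)) \ I).Adj 0 w))
      = (Finset.range (α + β)).biUnion (fun i => Finset.univ.filter (fun w => (F i).Adj 0 w)) := by
    ext w
    have := Set.ext_iff.1 e1 w
    simpa using this
  have c2 : ∀ i ∈ Finset.range (α + β),
      (Finset.univ.filter (fun w => (F i).Adj 0 w)).card = 2 := by
    intro i hi
    rw [← h2 i (Finset.mem_range.1 hi), ← Set.ncard_coe_finset]
    congr 1
    ext w
    simp
  have cI : (Finset.univ.filter (fun w => I.Adj 0 w)).card = 1 := by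
    rw [← hI 0, ← Set.ncard_coe_finset]
    congr 1
    ext w
    simp
  have hsum := congrArg Finset.card e2
  rw [Finset.card_biUnion, Finset.sum_congr rfl c2] at hsum
  · have hall : (Finset.univ.filter (fun w => ((⊤ : SimpleGraph (Fin 42)) \ I).Adj 0 w))
        = (Finset.univ.erase 0) \ (Finset.univ.filter (fun w => I.Adj 0 w)) := by
      ext w
      simp [eq_comm]
    have hsub : (Finset.univ.filter (fun w => I.Adj 0 w)) ⊆ Finset.univ.erase 0 := by
      intro w hw
      have : I.Adj 0 w := by simpa using hw
      simpa using this.ne'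
    rw [hall, Finset.card_sdiff_of_subset hsub, cI] at hsum
    simp at hsum
    omega
  · intro i hi j hj hij
    rw [Function.onFun, Finset.disjoint_left]
    intro w hw hwj
    have := hdis i (by simpa using hi) j (by simpa using hj) hij
    have hd := (Set.disjoint_left.1 this) (show s(0, w) ∈ (F i).edgeSet by simpa using hw)
    exact hd (by simpa using hwj)

/-! ### Graphs from self-maps -/

/-- The graph joining each vertex `u` to `f u`. -/
def stepGraph (f : Fin 42 → Fin 42) : SimpleGraph (Fin 42) :=
  SimpleGraph.fromRel (fun u v => f u = v)

theorem stepGraph_adj (f : Fin 42 → Fin 42) (u v : Fin 42) :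
    (stepGraph f).Adj u v ↔ u ≠ v ∧ (f u = v ∨ f v = u) := Iff.rfl

/-- If `f` has prime order `k` without fixed points, its neighbours are `f u` and `f^(k-1) u`. -/
theorem stepGraph_neighborSet (f : Fin 42 → Fin 42) (k : ℕ) (hk : 1 ≤ k)
    (hf : ∀ u, f^[k] u = u) (hne : ∀ u, f u ≠ u) (u : Fin 42) :
    (stepGraph f).neighborSet u = {f u, f^[k - 1] u} := by
  obtain ⟨m, rfl⟩ : ∃ m, k = m + 1 := ⟨k - 1, by omega⟩
  ext v
  simp only [SimpleGraph.mem_neighborSet, stepGraph_adj, Set.mem_insert_iff,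
    Set.mem_singleton_iff, Nat.add_sub_cancel]
  constructor
  · rintro ⟨-, h | h⟩
    · exact Or.inl h.symm
    · right
      rw [← h, ← Function.iterate_succ_apply, hf]
  · rintro (h | h)
    · subst h
      exact ⟨(hne u).symm, Or.inl rfl⟩
    · have : f v = u := by rw [h, ← Function.iterate_succ_apply' f, hf]
      refine ⟨?_, Or.inr this⟩
      rintro rfl
      exact hne _ this

theorem stepGraph_isCycleFactor (f : Fin 42 → Fin 42) (k : ℕ) (hk : k.Prime) (hk2 : k ≠ 2)
    (hf : ∀ u, f^[k] u = u) (hne : ∀ u, f u ≠ u) : IsCycleFactor (stepGraph f) k := by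
  have hper : ∀ u, Function.minimalPeriod f u = k := by
    intro u
    have := Fact.mk hk
    exact Function.minimalPeriod_eq_prime (hf u) (hne u)
  have h3 : 3 ≤ k := by
    have := hk.two_le
    omega
  have hinj : ∀ u, ∀ i < k, ∀ j < k, f^[i] u = f^[j] u → i = j := by
    intro u i hi j hj h
    exact (Function.iterate_injOn_Iio_minimalPeriod (f := f) (x := u))
      (by simpa [hper u] using hi) (by simpa [hper u] using hj) h
  refine ⟨fun u => ?_, fun u => ?_⟩
  · rw [stepGraph_neighborSet f k (by omega) hf hne u]
    apply Set.ncard_pair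
    intro h
    have := hinj u 1 (by omega) (k - 1) (by omega) (by simpa using h)
    omega
  · have hsupp : ((stepGraph f).connectedComponentMk u).supp
        = ((Finset.range k).image (fun i => f^[i] u) : Finset (Fin 42)) := by
      ext v
      rw [SimpleGraph.ConnectedComponent.mem_supp_iff, SimpleGraph.ConnectedComponent.eq]
      constructor
      · intro h
        have hr := h.symm
        obtain ⟨w⟩ := hr
        have key : ∀ a b : Fin 42, (stepGraph f).Walk a b → ∃ i, f^[i] a = b := by
          intro a b w
          induction w with
          | nil => exact ⟨0, rfl⟩
          | @cons x y z hxy _ ih =>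
            obtain ⟨i, hi⟩ := ih
            rcases hxy.2 with h | h
            · exact ⟨i + 1, by rw [Function.iterate_succ_apply, h, hi]⟩
            · refine ⟨i + (k - 1), ?_⟩
              rw [← hi, Function.iterate_add_apply]
              congr 1
              rw [← h, ← Function.iterate_succ_apply, Nat.succ_eq_add_one,
                Nat.sub_add_cancel (by omega), hf]
        obtain ⟨i, hi⟩ := key _ _ w
        simp only [Finset.coe_image, Finset.coe_range, Set.mem_image, Set.mem_Iio]
        refine ⟨i % k, Nat.mod_lt _ (by omega), ?_⟩
        rw [← hi, ← hper u, Function.iterate_mod_minimalPeriod_eq]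
      · simp only [Finset.coe_image, Finset.coe_range, Set.mem_image, Set.mem_Iio]
        rintro ⟨i, -, rfl⟩
        have : ∀ i, (stepGraph f).Reachable (f^[i] u) u := by
          intro i
          induction i with
          | zero => exact SimpleGraph.Reachable.refl _
          | succ i ih =>
            refine SimpleGraph.Reachable.trans (SimpleGraph.Adj.reachable ?_) ih
            rw [Function.iterate_succ_apply', stepGraph_adj]
            exact ⟨hne _, Or.inr rfl⟩
        exact this i
    rw [hsupp, Set.ncard_coe_finset, Finset.card_image_of_injOn, Finset.card_range]
    intro i hi j hj h
    exact hinj u i (by simpa using hi) j (by simpa using hj) h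

/-! ### Packed factors and their check -/

/-- The successor of `u` in the factor packed as the base-64 digits of `N`. -/
def nxt (N u : ℕ) : ℕ := (N >>> (6 * u)) % 64 % 42

/-- The successor map on `Fin 42`. -/
def nxtF (N : ℕ) (u : Fin 42) : Fin 42 := ⟨nxt N u, Nat.mod_lt _ (by norm_num)⟩

theorem nxtF_iterate (N k : ℕ) (u : Fin 42) : ((nxtF N)^[k] u : ℕ) = (nxt N)^[k] u := by
  induction k generalizing u with
  | zero => rfl
  | succ k ih => rw [Function.iterate_succ_apply, Function.iterate_succ_apply, ih]; rfl

/-- All cycles of `N` have length (a divisor of) `k`, and there are no fixed points. -/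
def checkFactor (k N : ℕ) : Bool :=
  (List.range 42).all fun u => ((nxt N)^[k] u == u) && !(nxt N u == u)

/-- Set of bits at the positions in `l`. -/
def maskOf (l : List ℕ) : ℕ := l.foldr (fun x m => 2 ^ x ||| m) 0

theorem testBit_maskOf (l : List ℕ) (v : ℕ) : (maskOf l).testBit v = true ↔ v ∈ l := by
  induction l with
  | nil => simp [maskOf]
  | cons a l ih =>
    have : maskOf (a :: l) = 2 ^ a ||| maskOf l := rfl
    rw [this, Nat.testBit_or, Bool.or_eq_true, ih, Nat.testBit_two_pow]
    simp [eq_comm]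

/-- Neighbours of `u` over all the factors. -/
def nbrs (A B : List ℕ) (u : ℕ) : List ℕ :=
  u :: (u + 21) % 42 :: (A.map (nxt · u) ++ (A.map (fun N => (nxt N)^[2] u) ++
    (B.map (nxt · u) ++ B.map (fun N => (nxt N)^[6] u))))

/-- The complete check of a certificate. -/
def checkAll (A B : List ℕ) : Bool :=
  (A.length + B.length == 20) && (A.all (checkFactor 3) && (B.all (checkFactor 7) &&
    (List.range 42).all fun u => maskOf (nbrs A B u) == 2 ^ 42 - 1))

theorem checkFactor_spec (k N : ℕ) (h : checkFactor k N = true) :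
    (∀ u, (nxtF N)^[k] u = u) ∧ ∀ u, nxtF N u ≠ u := by
  simp only [checkFactor, List.all_eq_true, List.mem_range, Bool.and_eq_true, beq_iff_eq,
    Bool.not_eq_true', beq_eq_false_iff_ne] at h
  refine ⟨fun u => Fin.ext ?_, fun u hu => (h u u.2).2 (congrArg Fin.val hu)⟩
  rw [nxtF_iterate]
  exact (h u u.2).1

/-- The removed perfect matching. -/
def matchI (u : Fin 42) : Fin 42 := u + 21

theorem isOneFactor_matchI : IsOneFactor (stepGraph matchI) := by
  intro u
  rw [stepGraph_neighborSet matchI 2 (by norm_num) (by decide +kernel) (by decide +kernel) u]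
  simp

theorem hw_of_check (A B : List ℕ) (h : checkAll A B = true) :
    HW 42 3 7 A.length B.length := by
  classical
  simp only [checkAll, Bool.and_eq_true, beq_iff_eq, List.all_eq_true, List.mem_range] at h
  obtain ⟨hlen, hA, hB, hmask⟩ := h
  set g : ℕ → ℕ := fun i => (A ++ B).getD i 0 with hg
  set F : ℕ → SimpleGraph (Fin 42) := fun i => stepGraph (nxtF (g i)) with hF
  have gA : ∀ i < A.length, g i ∈ A := by
    intro i hi
    simp [hg, List.getElem?_append_left hi, List.getElem?_eq_getElem hi]
  have gB : ∀ i, A.length ≤ i → i < A.length + B.length → g i ∈ B := by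
    intro i hi hi2
    have : i - A.length < B.length := by omega
    simp [hg, List.getElem?_append_right hi, List.getElem?_eq_getElem this]
  have cA : ∀ i < A.length, IsCycleFactor (F i) 3 := fun i hi =>
    let s := checkFactor_spec 3 _ (hA _ (gA i hi))
    stepGraph_isCycleFactor _ 3 (by norm_num) (by norm_num) s.1 s.2
  have cB : ∀ i, A.length ≤ i → i < A.length + B.length → IsCycleFactor (F i) 7 :=
    fun i hi hi2 =>
    let s := checkFactor_spec 7 _ (hB _ (gB i hi hi2))
    stepGraph_isCycleFactor _ 7 (by norm_num) (by norm_num) s.1 s.2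
  set I := stepGraph matchI with hIdef
  have hIone : IsOneFactor I := isOneFactor_matchI
  have h2 : ∀ i < 20, ∀ u, ((F i).neighborSet u).ncard = 2 := by
    intro i hi u
    by_cases h : i < A.length
    · exact (cA i h).1 u
    · exact (cB i (by omega) (by omega)).1 u
  have adjstep : ∀ i < 20, ∀ u, (F i).Adj u (nxtF (g i) u) := by
    intro i hi u
    have : nxtF (g i) u ≠ u := by
      by_cases h : i < A.length
      · exact (checkFactor_spec 3 _ (hA _ (gA i h))).2 u
      · exact (checkFactor_spec 7 _ (hB _ (gB i (by omega) (by omega)))).2 u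
    exact ⟨this.symm, Or.inl rfl⟩
  have adjA : ∀ i < A.length, ∀ u, (F i).Adj u ((nxtF (g i))^[2] u) := by
    intro i hi u
    have s := checkFactor_spec 3 _ (hA _ (gA i hi))
    have : (nxtF (g i))^[2] u ∈ (stepGraph (nxtF (g i))).neighborSet u := by
      rw [stepGraph_neighborSet _ 3 (by norm_num) s.1 s.2 u]; simp
    exact this
  have adjB : ∀ i, A.length ≤ i → i < A.length + B.length → ∀ u,
      (F i).Adj u ((nxtF (g i))^[6] u) := by
    intro i hi hi2 u
    have s := checkFactor_spec 7 _ (hB _ (gB i hi hi2))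
    have : (nxtF (g i))^[6] u ∈ (stepGraph (nxtF (g i))).neighborSet u := by
      rw [stepGraph_neighborSet _ 7 (by norm_num) s.1 s.2 u]; simp
    exact this
  have idxA : ∀ N ∈ A, ∃ i < A.length, g i = N := by
    intro N hN
    obtain ⟨i, hi, rfl⟩ := List.getElem_of_mem hN
    exact ⟨i, hi, by
      simp [hg, List.getElem?_append_left hi, List.getElem?_eq_getElem hi]⟩
  have idxB : ∀ N ∈ B, ∃ i, A.length ≤ i ∧ i < A.length + B.length ∧ g i = N := by
    intro N hN
    obtain ⟨i, hi, rfl⟩ := List.getElem_of_mem hN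
    refine ⟨A.length + i, by omega, by omega, ?_⟩
    simp [hg, hi]
  -- every pair is covered
  have cover : ∀ u v : Fin 42, u ≠ v → I.Adj u v ∨ ∃ i < 20, (F i).Adj u v := by
    intro u v huv
    have hb : (maskOf (nbrs A B u)).testBit v = true := by
      rw [hmask u u.2, Nat.testBit_two_pow_sub_one]
      simp
    rw [testBit_maskOf] at hb
    simp only [nbrs, List.mem_cons, List.mem_append, List.mem_map] at hb
    rcases hb with h | h | ⟨N, hN, h⟩ | ⟨N, hN, h⟩ | ⟨N, hN, h⟩ | ⟨N, hN, h⟩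
    · exact absurd (Fin.ext h.symm) huv
    · left
      refine ⟨huv, Or.inl (Fin.ext ?_)⟩
      rw [h]
      rfl
    · obtain ⟨i, hi, rfl⟩ := idxA N hN
      refine Or.inr ⟨i, by omega, ?_⟩
      have e : v = nxtF (g i) u := Fin.ext h.symm
      rw [e]; exact adjstep i (by omega) u
    · obtain ⟨i, hi, rfl⟩ := idxA N hN
      refine Or.inr ⟨i, by omega, ?_⟩
      have e : v = (nxtF (g i))^[2] u := Fin.ext (by rw [nxtF_iterate]; exact h.symm)
      rw [e]; exact adjA i hi u
    · obtain ⟨i, hi, hi2, rfl⟩ := idxB N hN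
      refine Or.inr ⟨i, by omega, ?_⟩
      have e : v = nxtF (g i) u := Fin.ext h.symm
      rw [e]; exact adjstep i (by omega) u
    · obtain ⟨i, hi, hi2, rfl⟩ := idxB N hN
      refine Or.inr ⟨i, by omega, ?_⟩
      have e : v = (nxtF (g i))^[6] u := Fin.ext (by rw [nxtF_iterate]; exact h.symm)
      rw [e]; exact adjB i hi hi2 u
  -- by counting, every pair is covered exactly once
  have uniq : ∀ u v : Fin 42, ∀ i < 20, (F i).Adj u v →
      ¬ I.Adj u v ∧ ∀ j < 20, (F j).Adj u v → i = j := by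
    intro u v i hi hiv
    let G : ℕ → SimpleGraph (Fin 42) := fun j => if j = 20 then I else F j
    let S : ℕ → Finset (Fin 42) := fun j => Finset.univ.filter (fun w => (G j).Adj u w)
    have memS : ∀ j w, w ∈ S j ↔ (G j).Adj u w := by intro j w; simp [S]
    have cardS : ∀ j, ((S j).card : ℕ) = ((G j).neighborSet u).ncard := by
      intro j
      rw [← Set.ncard_coe_finset]
      congr 1
      ext w
      simp [S]
    have Glt : ∀ j < 20, G j = F j := by
      intro j hj
      simp [G, hj.ne]
    have G20 : G 20 = I := by simp [G]
    -- remove any one common member: the total is too small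
    have key : ∀ j, j ≤ 20 → j ≠ i → v ∉ S j := by
      intro j hj hji hvj
      let S' : ℕ → Finset (Fin 42) := fun m => if m = i then (S i).erase v else S m
      have hcov : Finset.univ.erase u ⊆ (Finset.range 21).biUnion S' := by
        intro w hw
        have hwu : w ≠ u := by simpa using hw
        rw [Finset.mem_biUnion]
        by_cases hwv : w = v
        · subst hwv
          exact ⟨j, by simp; omega, by simpa [S', hji] using hvj⟩
        · rcases cover u w hwu.symm with h | ⟨m, hm, h⟩
          · refine ⟨20, by simp, ?_⟩
            have : (20 : ℕ) ≠ i := by omega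
            simp only [S', if_neg this, memS, G20]
            exact h
          · refine ⟨m, by simp; omega, ?_⟩
            by_cases hmi : m = i
            · subst hmi
              simp only [S', if_true, Finset.mem_erase, memS, Glt m hm]
              exact ⟨hwv, h⟩
            · simp only [S', if_neg hmi, memS, Glt m hm]
              exact h
      have c1 := Finset.card_le_card hcov
      have c2 : ((Finset.range 21).biUnion S').card ≤ ∑ m ∈ Finset.range 21, (S' m).card :=
        Finset.card_biUnion_le
      have hvi : v ∈ S i := by rw [memS, Glt i hi]; exact hiv
      have c3 : ∑ m ∈ Finset.range 21, (S' m).card < ∑ m ∈ Finset.range 21, (S m).card := by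
        apply Finset.sum_lt_sum
        · intro m _
          by_cases hmi : m = i
          · subst hmi
            simp only [S', if_true]
            exact Finset.card_le_card (Finset.erase_subset _ _)
          · simp [S', hmi]
        · refine ⟨i, by simp; omega, ?_⟩
          simp only [S', if_true]
          exact Finset.card_erase_lt_of_mem hvi
      have c4 : ∑ m ∈ Finset.range 21, (S m).card = 41 := by
        rw [Finset.sum_range_succ, cardS 20, G20, hIone u,
          Finset.sum_congr rfl (g := fun _ => 2)]
        · simp
        · intro m hm
          rw [cardS, Glt m (by simpa using hm)]
          exact h2 m (by simpa using hm) u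
      have c5 : (Finset.univ.erase u : Finset (Fin 42)).card = 41 := by simp
      omega
    refine ⟨fun h => key 20 le_rfl (by omega) ?_, fun j hj h => ?_⟩
    · rw [memS, G20]; exact h
    · by_contra hne
      refine key j hj.le (Ne.symm hne) ?_
      rw [memS, Glt j hj]; exact h
  refine ⟨I, fun h => absurd h (by decide), fun _ => hIone, F, ⟨?_, ?_, ?_⟩, cA, cB⟩
  · intro i hi u v h
    rw [SimpleGraph.sdiff_adj]
    exact ⟨h.ne, (uniq u v i (by omega) h).1⟩
  · intro i hi j hj hij
    rw [Set.disjoint_left]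
    intro e
    induction e using Sym2.ind with
    | _ u v =>
      intro h hj2
      exact hij ((uniq u v i (by omega) h).2 j (by omega) hj2)
  · ext e
    induction e using Sym2.ind with
    | _ u v =>
      simp only [SimpleGraph.mem_edgeSet, Set.mem_iUnion, Set.mem_Iio, SimpleGraph.sdiff_adj,
        SimpleGraph.top_adj]
      constructor
      · rintro ⟨hne, hnI⟩
        rcases cover u v hne with h | ⟨i, hi, h⟩
        · exact absurd h hnI
        · exact ⟨i, by omega, h⟩
      · rintro ⟨i, hi, h⟩
        exact ⟨h.ne, (uniq u v i (by omega) h).1⟩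

/-! ### The certificates -/

/-- Three `C_3`-factors that can be exchanged for `tradeS`. -/
def tradeT : List ℕ := [
  3099750436247675174170761681221179449112096460716383795034981098025269105159,
  2870004228192079327607232596728156523832792610944641610112475431204949893704,
  2423076055628927799836909322500066896527442322854102698857296247950838907594]

/-- Three `C_7`-factors with the same edges as `tradeT`. -/
def tradeS : List ℕ := [
  3780152184733086615774668080984190491356781417187194232795887107577402921479,
  3903664995281503677154800509143033897493431444921141502766445432596205446024,
  2417858328561649124679250829559393432288681454764811305025557901617920549454]

/-- The `C_3`-factors besides `tradeT` in the solution with β = 0. -/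
def triF0 : List ℕ := [
  1721469499763091660461420742525806344468031592113668130657507414695367987979,
  2065892497377641860486383330433195204203655463175186512891684505861713064780,
  1836149355266514517469470354963480218085953741870570461965653676497929548425,
  1032037624451975431323196943316121272148478945659812588573837612650962433169,
  687415243803352697433585919660560543240469070045662410969064839194161517583,
  572542139412696328531740383504768299862410293149183991935235469429245273363,
  1146907709339995916373133711812859632981034377063831750067734784554870080982,
  457669035747832396088181631467647502976395958284793132870158978737742894810,
  10740863185467253360706738962301727973006858863344784017836894338634606428,
  227925893638350557628589119690205543279978994678623645791921093778300340190,
  1306808170070526130113404978625548782853680757008541498504526371215587696792,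
  4143534638227797305567285249297745494365038858855089130562851161723627386434,
  3977338662498105577285356828696230834127140135106039449235413207956786880727,
  1356981301547079897221092580228277880335432052566170682472551996438008841741,
  117609475399912655531794208130210811038353768711466320011965791229906883026,
  404873951928706603160852785670636865922077114747248007974525484876952011972,
  4315789295839244351482165643513684984578624418004653577642420833504591167809]

/-- The `C_7`-factors in the solution with β = 0. -/
def sevF0 : List ℕ := [
  ]

/-- The `C_3`-factors besides `tradeT` in the solution with β = 1. -/
def triF1 : List ℕ := [
  2065892497377641860486383330433195204203655463175186819920464059603493901067,
  1836149355266540636578700336593960307058924210038553609671665510596160287564,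
  2180765601041693288058785512788492251215118206967168931912594823800521261517,
  687415243803483293730658752426671121501014867292931487964952163021138997897,
  1032037624452967957184127635578618166235893997603798132899703564473030468883,
  1491526974617630593764128093243314099659603324203153565660716256148059669714,
  1146907709339995916373133699945405863906110182432327661691326837919994193496,
  227925893637671415883424800630044517544313532817273101746481923025145267670,
  572542139413529283591804363211247886040179100334728395932409347439944407071,
  1247963853969895474745292682040157085886589421657930859241705620740314117123,
  364937229449620549423768443491886872004566081688418386375068355201833439522,
  1759839009997830244795154463861693176960919147171709321534958029804258481943,
  4189486037105974396087808082772276960205660796983076136960738143206807033346,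
  472773117922023375483000347463234542371956909776655435927130121450798289129,
  1424327322515863664584698507472609450631194596483271448259703106900815530216,
  4427754817397317274807115607451748935772580336918044878688884079474546985551]

/-- The `C_7`-factors in the solution with β = 1. -/
def sevF1 : List ℕ := [
  4031299517257721519264329466051630476633620058868538078114770352986429337729]

/-- The `C_3`-factors besides `tradeT` in the solution with β = 2. -/
def triF2 : List ℕ := [
  2180765601042555219017552160934701043710217310436583707144833898577440047565,
  1721469499762075871561654572219126042912574975681130998469152545932208812681,
  2065892497376701572854472493800417876755043858172030449513885883009891070796,
  572542139413033020312442231548746696026397144159593501120486474534969201419,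
  1376653870228068370424468107017698641633384849522217276876437690781881943250,
  1146907709340074229096008537983428725476156419045371526872830996383562261779,
  1491526974617656712197527522885980045342747809346011510531558128486035576538,
  687415243803378816553375812115766481926979077472429710882266921915566888471,
  12399264076265722823913948911250816782798583482249031005549917070528419749,
  908422985752623894507419156871348884315532644145674942879488063526505413016,
  357899573900409592181745460487298878142954387245776650681723849134825436753,
  1309235853076221050500090154764392284423923464889875420203472042629259175068,
  4298906350641817323409157116418974049471932324190914229161492788459609077571,
  226299677402283474092758012837412419410134899539419241562129121109557240079,
  124038236742064292977789679872174709815886095486156637529223381478455137309]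

/-- The `C_7`-factors in the solution with β = 2. -/
def sevF2 : List ℕ := [
  4031299517257721519264329466051630476633620058868538078114770352986429337729,
  4133804692206369417037465541785834441634994695936092657460984775875889479874]

/-- The `C_3`-factors besides `tradeT` in the solution with β = 7. -/
def triF7 : List ℕ := [
  1836149355267480924897001576001720743284931178895262241134156264315831759497,
  1951019440154534959266253001816887306474925376729479430754428580161799881165,
  10740863184892632721810086633843999856113283226925011635457459231037117195,
  342795978525874691519909744322037584151495564444243212150401156288660665164,
  1491526974618597000505268911506571516064981439082625344392061937944468460559,
  1376653870227128082106166855732340074540455341411120278896000751657907467409,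
  1032037624452053787985616287966360547003489168182082364747772175625161073939,
  1146907709339995916373133711812859632987638319328741054623386416796779513302,
  814852593999092170995024073467489211436856185261457976667194292891610076890,
  113246038133987412312798142387143893060359456056132923980449503851785623583]

/-- The `C_7`-factors in the solution with β = 7. -/
def sevF7 : List ℕ := [
  1735488357392259027005314558747006646623349842191383948874595426356366309657,
  2630851068638017841889131154207751785576068133855618392368708272611353843332,
  2038213218584802859208779613773343874703333065701698324242226421134182166854,
  294418701878381619411555968705099815529873236788605909814004092135523246116,
  4483465621006923342109330108189457759153681926637981039807356978078379153733,
  4021907800687989607655037474768650736615038776121417989515601987993669886373,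
  4209215963459679993208098873402239875483129488153046906752835091319093987747]

/-- The `C_3`-factors besides `tradeT` in the solution with β = 8. -/
def triF8 : List ℕ := [
  1836149355266462323855825551994993343077662937053611867150540615338404393609,
  227925893637932607072101783854718120597611835136202319876828944047108051723,
  457669035748015229927883916428947484507653592080637649435567096915516752333,
  814852593999954101953790780991398100358730362957941612855905243927149089807,
  1032037624452863525341463000735451919251490611790599739733864089806039499986,
  1261780766562293080923972764406260529413107319813228333155243413624849511569,
  1376653870227026462404912044905524827386168947810737416437941534211520128275,
  917357768947612286007405954135297991577232647807350188192208621405407634779,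
  113246038134039605926442939416832903136673602677365775865626315592315303837]

/-- The `C_7`-factors in the solution with β = 8. -/
def sevF8 : List ℕ := [
  4095995206162420575573464507899897795781807730230830250447054312208749324634,
  1726365514152692142589777463655268130695703899455980772062359028418505500387,
  2046989101302626207927635651781664643794898002432807050832602099068782336258,
  64527710791597762474774684503524255306048562410085180509596043027701977318,
  4244646595041319134118325274244042720432374805649382333403334602079757421017,
  3211501293560426742395660080308314460234256872604980223646052479239548470916,
  3002431797529075233621233320271829014031420677767170343616076044520703504740,
  4031299517257721519264329466051630476633620058868538078114770352986429337729]

/-- The `C_3`-factors besides `tradeT` in the solution with β = 9. -/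
def triF9 : List ℕ := [
  1721469499763065541352190754956528390553632214400949622956097121751699337865,
  1836149355267454805777211731056914798033751402759006293381359924610574090701,
  1618964324813451280766898522073519499958749818339802690984540358875249693451,
  687415243803587769513032933771922653393145697024498565045563537017794491212,
  1032037624452001549756596426407831410129249619994556347626084195754689762319,
  113246038133256076953989014419532226892849799221131278288107735520447644882,
  917357768947612286007405960074098257541590335638954274753095400382812215002,
  457669035748563731446990723802454905563519486558833038551714807309599106908]

/-- The `C_7`-factors in the solution with β = 9. -/
def sevF9 : List ℕ := [
  2042781957432176139996227718134832683706568984734003476519983018980767827857,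
  586817988085589021448416183063637456867397535762304896813842161431094883494,
  1486196455225067721283776064389574478893740286835974893241442675327580060099,
  1150370666039450305093643294061729066615062972002425155893433639592065663271,
  1368539957601005733428740881376319732986413273790685322309240534392826518043,
  65815977827339005740397302034927007409943131966538898498624360103605343582,
  4327095684548786731492911409731613782100520055980999367123828568539100178397,
  4031299517257721519264329466051630476633620058868538078114770352986429337729,
  4133804692206369417037465541785834441634994695936092657460984775875889479874]

/-- The `C_3`-factors besides `tradeT` in the solution with β = 10. -/
def triF10 : List ℕ := [
  2065892497377667979595613335169320264931438140867214824102147357544623928140,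
  1618964324813474587745278536424079385407037638857663031062871389130683875789,
  10740863184814319998935278929229663090359424778978674201177273663222755977,
  1491526974618623119625058791434620563959501193079818298744297730141136413971,
  917357768947612286007405972601255148332230262770270142500136797893250585615,
  687415243803326578324355891179383582535878890022700170768605751231504266385,
  457669035747910708811056433233461573787096724871493167571671213392088618714]

/-- The `C_7`-factors in the solution with β = 10. -/
def sevF10 : List ℕ := [
  1940344116310800523537603053422289344103047119853734689202724499525040511442,
  1267605465261111989900801060810464239784546202933701849509291889725233071332,
  843013998269278040962612017319157067981082825626784252848972666461923658079,
  3408729952306767514902020733812941727257390483458849899345002401347363563560,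
  1163419665393166601047369188164266848841033805261470553123941505030965566045,
  2203675916220748168276388957813046121787944904135447567882947715598935275431,
  3647025773238391663654580703181554390302032100516055048423271569153550580262,
  4031299517257721519264329466051630476633620058868538078114770352986429337729,
  4133804692206369417037465541785834441634994695936092657460984775875889479874,
  4248484547710758637533501833016728163601100144040312811083052173116264960259]

/-- The `C_3`-factors besides `tradeT` in the solution with β = 14. -/
def triF14 : List ℕ := [
  2640261086081445391090768608101857607158140915109336088036679154944886294689,
  113246038134039605926442922249985796315190649822980623122990166762185684893,
  227925893638428870351463915517219310612741846534320937476401939026936452898]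

/-- The `C_7`-factors in the solution with β = 14. -/
def sevF14 : List ℕ := [
  481414335378046804294517705659894180361360566107598533946190144063655796950,
  1977368259256527487276931712578186942297763681568954506412739393235149669856,
  3637153633252299252683473164859800666447077989044476559871638533503133780043,
  1308527110774800662116143414814330773728911881561043676953965648086697386775,
  4253546843286737789787619964154945298150344582676690234678630422408806323716,
  4560293717343498537518153043971207865005688752928548513231726865379074347364,
  2493447873953277158760228181456362440407895707986988713460824104211646540098,
  2076350795045361622806274797072315515828903657357854367198702827182489971151,
  2735220575083180860946091242258292037982156175295150848228391881926473843747,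
  1480856053781000447446760723048216433671209279391685766130734085949207419145,
  17040508839768335078989206996939069341173645048666265254856588125050393222,
  1193097740688707664237094253778956751871956218885906064232618829219131600926,
  4103069715613121968760529750092316167974416392451843134086189647375492978648,
  2179134119686867739029315866252140538960715509807262915956077260383734859366]

/-- The `C_3`-factors besides `tradeT` in the solution with β = 15. -/
def triF15 : List ℕ := [
  457669035748093542650758706317163424424425318976621254585223211908517909259,
  2525581230577003889112558298036145546226693712973332565925379725825602357214]

/-- The `C_7`-factors in the solution with β = 15. -/
def sevF15 : List ℕ := [
  3684169557434419503789187151957485917062036136059112755162244229694462912796,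
  4317546305625030152219541717981240872308654607765329056946712446011204327234,
  1419253776861600240703037589498522819992869453520602977953364833944563474651,
  4103047848361006523764571261093642310703321911013433575397073570445517407584,
  2177541365951138677525762682573150816937134738790438112740113124056831977554,
  1974411536444674966393766803197489639763343005675170615399447234801408287940,
  3448116621452616506385586260802307813354668642973863083785725349300895039843,
  1021247622262739164534457128789230618650995205945860092325736982947481151137,
  341670733233628022886757165463099665335295639376404765639145555231485311144,
  270783299314723104564185518291437773055205693223371260321834234446959987290,
  2970990086364178626812738375686061502391527794099664661872235858681075742409,
  2096093621080586980278119899544330350145586710722502307348038773533765096105,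
  3207020707414243722185149535913644937765569886404860199488011536721390385380,
  2728042213592255078005058984714008867435942882111240627355942152324693248345,
  4031299517257721519264329466051630476633620058868538078114770352986429337729]

/-- The `C_3`-factors besides `tradeT` in the solution with β = 16. -/
def triF16 : List ℕ := [
  2525581230577630747294084723234712980297939280103334386786968046131023741389]

/-- The `C_7`-factors in the solution with β = 16. -/
def sevF16 : List ℕ := [
  394678591164689055232923552230768556462323868308857811950122023086884698526,
  3663286159018446556671899700957143991687414406780809531396789089757633345495,
  2981008806994713990987498035243319565795889178626851117403688511618444035615,
  2737291741405231161491094971110057351739420580669788234810309924796808665123,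
  821860145948611595395287391202174331683166991478187998209125566099608967436,
  2054883403769305413637633429691925216615844227689661991152695007927283110729,
  1361310553660217029941059768386568720110591253801398003939599570370624516773,
  4335987762861221704667250142057194519345004767131043328420467959927107801371,
  2611877988936924697232537320679258668366816904998051094951008901260780524888,
  32195383842669390413187484760601009465473503066406514814492756930933122663,
  2175184421410547682519927501632287121510078746441391409268564378044124211748,
  1823567085817232203988533513584016763518896479185010327477795048785162705248,
  1018709429206357822716572378382155006786088856057205619850169207708420302923,
  179033128684728892265913571966457891497566599892895211679418528311602455299,
  4031299517257721519264329466051630476633620058868538078114770352986429337729,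
  4133804692206369417037465541785834441634994695936092657460984775875889479874]

/-- The `C_3`-factors besides `tradeT` in the solution with β = 17. -/
def triF17 : List ℕ := [
  ]

/-- The `C_7`-factors in the solution with β = 17. -/
def sevF17 : List ℕ := [
  1832965971315832453123714739963830959269187709554185997580420979873738946063,
  828690616818434088378869399948006969136219843569606149735505425702718641161,
  2491837223813391349269140534943534700264530015554413728113420978064659649165,
  378332727178816151007505176449956348947224441841752662640216843188248818151,
  2617150911819924528609216162532209501007680409304452800531536847639296379420,
  1161209933372080956907164191679009714660301866352860646278337250483457398604,
  2062253066849875384058089347698074474728756197116882580377700039721015436119,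
  1589339474076489412489864396281963822454256783887843747820195358830777743635,
  502153432412332953471015326845958546540470133611000620824182736497822291233,
  3292302539997392344265535878025287718387330114131860136827274248511909587113,
  949073921619171305620582562089307577734110253288246215897306472112438757599,
  2959559422204222617087808748995933251786523495766298628625674341050874218520,
  1364531114867904949181489738965044411801274513482462482715226373016228599400,
  600797527220392528677632437236693216000980996823551943420789345573073955427,
  4031299517257721519264329466051630476633620058868538078114770352986429337729,
  4133804692206369417037465541785834441634994695936092657460984775875889479874,
  4248484547710758637533501833016728163601100144040312811083052173116264960259]

/-- The `C_3`-factors in the solution with β = 6. -/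
def triF6 : List ℕ := [
  1951019440154639435048627195039580902156220590886338518317823035215769272781,
  1491526974617630593764128081365872035867738286072411574342840791456752931855,
  1032037624452053787985616287966360547006189785838989540536950310670383002769,
  572542139412797948232995217427240224058618997284007031419675758691524101330,
  1376653870227128082106166837266382917782611724487919446871513693929101178521,
  10740863184608179180852962450678756390187769514750390475044089306478630618,
  457669035748668163289655394268271183405156183603949428954214570661893511199,
  3975409191982208674605751432198798667099517695710948122781851841196170002564,
  1245863165143287428859199154931828309580651736676814597555111876808806773075,
  243054322920901502620128256627148742626142055857912165102927041138476999974,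
  1196338616627368718598783223085669809856607325062898076090341564148885809635,
  4298120818568097998817999863094093420399651955444257767619893166667139549442,
  176025624730323640005253423981535741916192538660462703479603084407744123105,
  4143507509764295997292610876792137505391639496415644457007444649963842717825]

/-- The `C_7`-factors besides `tradeS` in the solution with β = 6. -/
def sevF6 : List ℕ := [
  1638398788452571413160102320304558303080973443628150540876429293371277809100,
  2184659136656950362986385347730544827688912784140075419394270694910478615179,
  3311631837761368181334989456139685973357473322984956399170450268169241940758]

theorem hw_case0 : HW 42 3 7 20 0 :=
  hw_of_check (tradeT ++ triF0) (sevF0) (by decide +kernel)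

theorem hw_case1 : HW 42 3 7 19 1 :=
  hw_of_check (tradeT ++ triF1) (sevF1) (by decide +kernel)

theorem hw_case2 : HW 42 3 7 18 2 :=
  hw_of_check (tradeT ++ triF2) (sevF2) (by decide +kernel)

theorem hw_case3 : HW 42 3 7 17 3 :=
  hw_of_check (triF0) (tradeS ++ sevF0) (by decide +kernel)

theorem hw_case4 : HW 42 3 7 16 4 :=
  hw_of_check (triF1) (tradeS ++ sevF1) (by decide +kernel)

theorem hw_case5 : HW 42 3 7 15 5 :=
  hw_of_check (triF2) (tradeS ++ sevF2) (by decide +kernel)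

theorem hw_case6 : HW 42 3 7 14 6 :=
  hw_of_check (triF6) (tradeS ++ sevF6) (by decide +kernel)

theorem hw_case7 : HW 42 3 7 13 7 :=
  hw_of_check (tradeT ++ triF7) (sevF7) (by decide +kernel)

theorem hw_case8 : HW 42 3 7 12 8 :=
  hw_of_check (tradeT ++ triF8) (sevF8) (by decide +kernel)

theorem hw_case9 : HW 42 3 7 11 9 :=
  hw_of_check (tradeT ++ triF9) (sevF9) (by decide +kernel)

theorem hw_case10 : HW 42 3 7 10 10 :=
  hw_of_check (tradeT ++ triF10) (sevF10) (by decide +kernel)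

theorem hw_case11 : HW 42 3 7 9 11 :=
  hw_of_check (triF8) (tradeS ++ sevF8) (by decide +kernel)

theorem hw_case12 : HW 42 3 7 8 12 :=
  hw_of_check (triF9) (tradeS ++ sevF9) (by decide +kernel)

theorem hw_case13 : HW 42 3 7 7 13 :=
  hw_of_check (triF10) (tradeS ++ sevF10) (by decide +kernel)

theorem hw_case14 : HW 42 3 7 6 14 :=
  hw_of_check (tradeT ++ triF14) (sevF14) (by decide +kernel)

theorem hw_case15 : HW 42 3 7 5 15 :=
  hw_of_check (tradeT ++ triF15) (sevF15) (by decide +kernel)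

theorem hw_case16 : HW 42 3 7 4 16 :=
  hw_of_check (tradeT ++ triF16) (sevF16) (by decide +kernel)

theorem hw_case17 : HW 42 3 7 3 17 :=
  hw_of_check (tradeT ++ triF17) (sevF17) (by decide +kernel)

theorem hw_case18 : HW 42 3 7 2 18 :=
  hw_of_check (triF15) (tradeS ++ sevF15) (by decide +kernel)

theorem hw_case19 : HW 42 3 7 1 19 :=
  hw_of_check (triF16) (tradeS ++ sevF16) (by decide +kernel)

theorem hw_case20 : HW 42 3 7 0 20 :=
  hw_of_check (triF17) (tradeS ++ sevF17) (by decide +kernel)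

theorem stmt_17 (α β : ℕ) : HW 42 3 7 α β ↔ α + β = 20 := by
  refine ⟨hw_count α β, fun h => ?_⟩
  obtain rfl : α = 20 - β := by omega
  have hb : β ≤ 20 := by omega
  clear h
  interval_cases β
  · exact hw_case0
  · exact hw_case1
  · exact hw_case2
  · exact hw_case3
  · exact hw_case4
  · exact hw_case5
  · exact hw_case6
  · exact hw_case7
  · exact hw_case8
  · exact hw_case9
  · exact hw_case10
  · exact hw_case11
  · exact hw_case12
  · exact hw_case13
  · exact hw_case14
  · exact hw_case15
  · exact hw_case16
  · exact hw_case17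
  · exact hw_case18
  · exact hw_case19
  · exact hw_case20
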